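/- Let m be a multicore with core block C and such that |γ^{jk}_{il}(m)| ≤ 2 for all i,l ∈ {0,…,e−1} and j,k ∈ {1,…,r}. Suppose that μ is a multicore in the core block C. Fix ī ∈ ℤ/eℤ, and let d and d' be the integers such that d_ī(m) = d − 1 and d_ī(μ) = d' − 1. Then d' ≤ d + 1. -/

import Mathlib

/-!
Combinatorial framework for multipartitions, residues, β-sets, abacus levels,
weights, hubs, core blocks and Scopes-type moves, following Fayers and the paper.
Rows and columns of Young diagrams are indexed from 0, so the node in row `b`
and column `c` (0-based) of component `j` has residue `a j + c - b` mod `e`.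
-/

open scoped Classical

namespace AK

/-- A partition, given by its (antitone, finitely supported) sequence of parts,
rows indexed from `0`. -/
structure PartitionFun : Type where
  part : ℕ → ℕ
  antitone : Antitone part
  finite_support : ∃ N, ∀ b, N ≤ b → part b = 0

/-- The node in row `b`, column `c` (0-based) belongs to the Young diagram. -/
def PartitionFun.InDiag (lam : PartitionFun) (b c : ℕ) : Prop := c < lam.part b

/-- The node `(b,c)` is removable: deleting it leaves the diagram of a partition. -/
def PartitionFun.Removable (lam : PartitionFun) (b c : ℕ) : Prop :=
  lam.part b = c + 1 ∧ lam.part (b + 1) ≤ c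

/-- The node `(b,c)` is addable: adjoining it gives the diagram of a partition. -/
def PartitionFun.Addable (lam : PartitionFun) (b c : ℕ) : Prop :=
  lam.part b = c ∧ (b = 0 ∨ lam.part b < lam.part (b - 1))

/-- An `r`-multipartition. -/
abbrev Multipartition (r : ℕ) := Fin r → PartitionFun

/-- Nodes: `(b, c, j)` with row `b`, column `c`, component `j`. -/
abbrev Node (r : ℕ) := ℕ × ℕ × Fin r

/-- The Young diagram of a multipartition, as a set of nodes. -/
def diag {r : ℕ} (lam : Multipartition r) : Set (Node r) :=
  {x | (lam x.2.2).InDiag x.1 x.2.1}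

/-- The size `n` of a multipartition of `n`. -/
noncomputable def msize {r : ℕ} (lam : Multipartition r) : ℕ :=
  Set.ncard (diag lam)

/-- `c_i(λ)`: the number of nodes of residue `i` (mod `e`). -/
noncomputable def nodeCount {r : ℕ} (e : ℕ) (a : Fin r → ℤ) (lam : Multipartition r)
    (i : ℤ) : ℕ :=
  Set.ncard {x : Node r | (lam x.2.2).InDiag x.1 x.2.1 ∧
    (a x.2.2 + (x.2.1 : ℤ) - (x.1 : ℤ)) % (e : ℤ) = i % e}

/-- Number of removable nodes of residue `i` in component `j`. -/
noncomputable def removableCount {r : ℕ} (e : ℕ) (a : Fin r → ℤ) (lam : Multipartition r)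
    (i : ℤ) (j : Fin r) : ℕ :=
  Set.ncard {p : ℕ × ℕ | (lam j).Removable p.1 p.2 ∧
    (a j + (p.2 : ℤ) - (p.1 : ℤ)) % (e : ℤ) = i % e}

/-- Number of addable nodes of residue `i` in component `j`. -/
noncomputable def addableCount {r : ℕ} (e : ℕ) (a : Fin r → ℤ) (lam : Multipartition r)
    (i : ℤ) (j : Fin r) : ℕ :=
  Set.ncard {p : ℕ × ℕ | (lam j).Addable p.1 p.2 ∧
    (a j + (p.2 : ℤ) - (p.1 : ℤ)) % (e : ℤ) = i % e}

/-- `δ^j_i(λ)` = (removable `i`-nodes of component `j`) − (addable `i`-nodes of component `j`). -/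
noncomputable def delta {r : ℕ} (e : ℕ) (a : Fin r → ℤ) (lam : Multipartition r)
    (i : ℤ) (j : Fin r) : ℤ :=
  (removableCount e a lam i j : ℤ) - (addableCount e a lam i j : ℤ)

/-- The hub `δ_i(λ) = Σ_j δ^j_i(λ)`. -/
noncomputable def hub {r : ℕ} (e : ℕ) (a : Fin r → ℤ) (lam : Multipartition r) (i : ℤ) : ℤ :=
  ∑ j : Fin r, delta e a lam i j

/-- Two multipartitions have the same hub. -/
def SameHub {r : ℕ} (e : ℕ) (a : Fin r → ℤ) (lam mu : Multipartition r) : Prop :=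
  ∀ i : ℤ, hub e a lam i = hub e a mu i

/-- `d_i(m) = min { δ^j_i(m) : 1 ≤ j ≤ r }`. -/
noncomputable def dmin {r : ℕ} (e : ℕ) (a : Fin r → ℤ) (lam : Multipartition r) (i : ℤ) : ℤ :=
  sInf {x : ℤ | ∃ j : Fin r, delta e a lam i j = x}

/-- The weight `w(λ) = Σ_j c_{a_j}(λ) − (1/2) Σ_{i∈ℤ/eℤ} (c_i(λ) − c_{i+1}(λ))²`. -/
noncomputable def weight {r : ℕ} (e : ℕ) (a : Fin r → ℤ) (lam : Multipartition r) : ℚ :=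
  (∑ j : Fin r, (nodeCount e a lam (a j) : ℚ)) -
    (1 / 2 : ℚ) * ∑ i ∈ Finset.range e,
      ((nodeCount e a lam (i : ℤ) : ℚ) - (nodeCount e a lam ((i : ℤ) + 1) : ℚ)) ^ 2

/-- The β-set `B^j = {λ_b + a_j − b : b ≥ 1}` (here with rows indexed from 0). -/
def betaSet (aj : ℤ) (lam : PartitionFun) : Set ℤ :=
  {x | ∃ b : ℕ, x = (lam.part b : ℤ) + aj - ((b : ℤ) + 1)}

/-- A partition is an `e`-core: `β ∈ B` implies `β − e ∈ B`. -/
def IsECore (e : ℕ) (aj : ℤ) (lam : PartitionFun) : Prop :=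
  ∀ x ∈ betaSet aj lam, x - (e : ℤ) ∈ betaSet aj lam

/-- A multicore: all components are `e`-cores. -/
def IsMulticore {r : ℕ} (e : ℕ) (a : Fin r → ℤ) (lam : Multipartition r) : Prop :=
  ∀ j, IsECore e (a j) (lam j)

/-- `ℓ^a_{ij}(λ)`: the level of the lowest bead on runner `i`, i.e. the largest `x`
with `x·e + i` in the β-set. -/
noncomputable def level (e : ℕ) (aj : ℤ) (lam : PartitionFun) (i : ℕ) : ℤ :=
  sSup {x : ℤ | x * (e : ℤ) + (i : ℤ) ∈ betaSet aj lam}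

/-- `γ^{jk}_i(λ) = ℓ^a_{ij}(λ) − ℓ^a_{ik}(λ)`. -/
noncomputable def gamma {r : ℕ} (e : ℕ) (a : Fin r → ℤ) (lam : Multipartition r)
    (i : ℕ) (j k : Fin r) : ℤ :=
  level e (a j) (lam j) i - level e (a k) (lam k) i

/-- `γ^{jk}_{il}(λ) = γ^{jk}_i(λ) − γ^{jk}_l(λ)`. -/
noncomputable def gammaD {r : ℕ} (e : ℕ) (a : Fin r → ℤ) (lam : Multipartition r)
    (i l : ℕ) (j k : Fin r) : ℤ :=
  gamma e a lam i j k - gamma e a lam l j k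

/-- Move a bead from runner `i` to runner `l` in the β-set `S`: replace the largest
element of `S` congruent to `i` mod `e` by the smallest integer congruent to `l`
mod `e` not in `S`. -/
noncomputable def moveBead (e : ℕ) (i l : ℕ) (S : Set ℤ) : Set ℤ :=
  insert (sInf {x : ℤ | x % (e : ℤ) = (l : ℤ) % e ∧ x ∉ S})
    (S \ {sSup {x : ℤ | x % (e : ℤ) = (i : ℤ) % e ∧ x ∈ S}})

/-- The effect of `s^{jk}_{il}` on the tuple of β-sets: move a bead from runner `i`
to runner `l` in component `j`, and from runner `l` to runner `i` in component `k`. -/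
noncomputable def swapSets {r : ℕ} (e i l : ℕ) (j k : Fin r) (S : Fin r → Set ℤ) :
    Fin r → Set ℤ :=
  Function.update (Function.update S j (moveBead e i l (S j))) k
    (moveBead e l i (Function.update S j (moveBead e i l (S j)) k))

/-- `m' = s^{jk}_{il}(m)`, expressed via β-sets. -/
def IsSwap {r : ℕ} (e : ℕ) (a : Fin r → ℤ) (i l : ℕ) (j k : Fin r)
    (m m' : Multipartition r) : Prop :=
  ∀ j', betaSet (a j') (m' j') = swapSets e i l j k (fun t => betaSet (a t) (m t)) j'

/-- `λ` lies in a core block: its weight is minimal among the weights of all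
multipartitions with the same hub. -/
def MinimalWeight {r : ℕ} (e : ℕ) (a : Fin r → ℤ) (lam : Multipartition r) : Prop :=
  ∀ mu : Multipartition r, SameHub e a lam mu → weight e a lam ≤ weight e a mu

/-- `(b_0,…,b_{e−1})` is a base tuple for `mu` with respect to the multicharge `a'`
(congruent to `a` componentwise mod `e`): each `ℓ^{a'}_{ij}(mu)` is `b i` or `b i + 1`. -/
def IsBaseTuple {r : ℕ} (e : ℕ) (a : Fin r → ℤ) (mu : Multipartition r)
    (a' : Fin r → ℤ) (b : ℕ → ℤ) : Prop :=
  (∀ j, (e : ℤ) ∣ (a' j - a j)) ∧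
    ∀ i < e, ∀ j, level e (a' j) (mu j) i = b i ∨ level e (a' j) (mu j) i = b i + 1

/-- `K_i(C)` for the core block of `mu`: among all base tuples (over all admissible
multicharges), take `b i` maximal and then `b (i−1)` minimal, and set
`K_i = b_i − b_{i−1} − 1` for `i ≠ 0`, `K_0 = b_0 − b_{e−1} − 2`. -/
noncomputable def Kconst {r : ℕ} (e : ℕ) (a : Fin r → ℤ) (mu : Multipartition r)
    (i : ℕ) : ℤ :=
  let Bi : ℤ := sSup {x : ℤ | ∃ a' bt, IsBaseTuple e a mu a' bt ∧ bt i = x}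
  let iprev : ℕ := if i = 0 then e - 1 else i - 1
  let Bp : ℤ := sInf {x : ℤ | ∃ a' bt, IsBaseTuple e a mu a' bt ∧ bt i = Bi ∧ bt iprev = x}
  Bi - Bp - (if i = 0 then 2 else 1)

/-- The map `φ_i : ℤ → ℤ`. -/
def phiMap (e i : ℕ) (x : ℤ) : ℤ :=
  if x % (e : ℤ) = ((i : ℤ) - 1) % e then x + 1
  else if x % (e : ℤ) = (i : ℤ) % e then x - 1
  else x

/-- Lexicographic order on multipartitions: `λ > μ`. -/
def lexGT {r : ℕ} (lam mu : Multipartition r) : Prop :=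
  ∃ j : Fin r, (∀ j' < j, (lam j').part = (mu j').part) ∧
    ∃ i : ℕ, (∀ i' < i, (lam j).part i' = (mu j).part i') ∧
      (mu j).part i < (lam j).part i

/-- `x` is above `y`: `j < j'` or (`j = j'` and `b < b'`). -/
def NodeAbove {r : ℕ} (x y : Node r) : Prop :=
  x.2.2 < y.2.2 ∨ (x.2.2 = y.2.2 ∧ x.1 < y.1)

/-- The order on nodes: `x < y` iff `y` is above `x`. -/
def NodeLT {r : ℕ} (x y : Node r) : Prop := NodeAbove y x

/-- `N_A(λ)` = (addable `i`-nodes of `λ` below `A`) − (removable `i`-nodes of `λ` below `A`). -/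
noncomputable def Nfac {r : ℕ} (e : ℕ) (a : Fin r → ℤ) (lam : Multipartition r)
    (i : ℤ) (A : Node r) : ℤ :=
  (Set.ncard {y : Node r | (lam y.2.2).Addable y.1 y.2.1 ∧
      (a y.2.2 + (y.2.1 : ℤ) - (y.1 : ℤ)) % (e : ℤ) = i % e ∧ NodeAbove A y} : ℤ) -
  (Set.ncard {y : Node r | (lam y.2.2).Removable y.1 y.2.1 ∧
      (a y.2.2 + (y.2.1 : ℤ) - (y.1 : ℤ)) % (e : ℤ) = i % e ∧ NodeAbove A y} : ℤ)

/-- `lam` is obtained from `mu` by adding one `e`-rim hook to some component: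
on β-sets, some `β ∈ B^j` with `β + e ∉ B^j` is replaced by `β + e`. -/
def AddRimHook {r : ℕ} (e : ℕ) (a : Fin r → ℤ) (mu lam : Multipartition r) : Prop :=
  ∃ (j : Fin r) (β : ℤ), β ∈ betaSet (a j) (mu j) ∧ β + (e : ℤ) ∉ betaSet (a j) (mu j) ∧
    betaSet (a j) (lam j) = insert (β + (e : ℤ)) (betaSet (a j) (mu j) \ {β}) ∧
    ∀ j' ≠ j, betaSet (a j') (lam j') = betaSet (a j') (mu j')

/-- The number of inversions (length) of a permutation of `Fin d`. -/
noncomputable def permLength (d : ℕ) (σ : Equiv.Perm (Fin d)) : ℕ :=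
  (Finset.univ.filter (fun p : Fin d × Fin d => p.1 < p.2 ∧ σ p.2 < σ p.1)).card

/-!
The beads of the runner through `i` of an `e`-core are the `i + te` with `t ≤ h_i` for some integer
`h_i`. Removable nodes of residue `i` are the beads on this runner that can slide one place left,
addable ones the gaps on it into which a bead can slide from the left, so `δ_i = h_i - h_{i-1}`, and
the difference of `δ_i` between two components of a multicore is one of the numbers `γ^{jk}_{il}`.

Hence the `δ^j_i(m)` all lie within `2` of their minimum `d - 1`, which is itself attained, so their
average is strictly less than `d + 1`. The `δ^j_i(μ)` have the same average because the hubs agree,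
and so their minimum `d' - 1` is less than `d + 1`.
-/

section BetaSet

variable (aj : ℤ) (lam : PartitionFun)

/-- The β-number `λ_b + a_j - (b + 1)` of row `b` (rows indexed from `0`). -/
def betaNumber (b : ℕ) : ℤ := (lam.part b : ℤ) + aj - ((b : ℤ) + 1)

/-- The content of the node in row `p.1` and column `p.2`, shifted by the charge: the integer whose
class modulo `e` is the residue of the node. -/
def chargedContent (p : ℕ × ℕ) : ℤ := aj + (p.2 : ℤ) - (p.1 : ℤ)

theorem betaNumber_strictAnti : StrictAnti (betaNumber aj lam) := by
  intro b b' hlt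
  have hpart := lam.antitone hlt.le
  simp only [betaNumber]
  omega

theorem betaNumber_mem_betaSet (b : ℕ) : betaNumber aj lam b ∈ betaSet aj lam := ⟨b, rfl⟩

theorem bddAbove_betaSet : BddAbove (betaSet aj lam) := by
  refine ⟨betaNumber aj lam 0, ?_⟩
  rintro _ ⟨b, rfl⟩
  exact (betaNumber_strictAnti aj lam).antitone (Nat.zero_le b)

theorem exists_Iic_subset_betaSet : ∃ N, Set.Iic N ⊆ betaSet aj lam := by
  obtain ⟨n, hn⟩ := lam.finite_support
  refine ⟨aj - (n + 1), fun y hy => ⟨(aj - 1 - y).toNat, ?_⟩⟩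
  rw [Set.mem_Iic] at hy
  rw [hn _ (by omega)]
  omega

variable {aj lam} {b c : ℕ}

theorem betaNumber_sub_one_mem_iff :
    betaNumber aj lam b - 1 ∈ betaSet aj lam ↔ lam.part (b + 1) = lam.part b := by
  constructor
  · rintro ⟨b', hb'⟩
    change betaNumber aj lam b - 1 = betaNumber aj lam b' at hb'
    have hlt : b < b' := (betaNumber_strictAnti aj lam).lt_iff_gt.mp (by omega)
    have hle := (betaNumber_strictAnti aj lam).antitone (show b + 1 ≤ b' from hlt)
    have hpart : lam.part (b + 1) ≤ lam.part b := lam.antitone b.le_succ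
    simp only [betaNumber] at *
    omega
  · intro hpart
    refine ⟨b + 1, ?_⟩
    simp only [betaNumber, hpart]
    omega

theorem betaNumber_add_one_mem_iff :
    betaNumber aj lam b + 1 ∈ betaSet aj lam ↔ b ≠ 0 ∧ lam.part (b - 1) = lam.part b := by
  constructor
  · rintro ⟨b', hb'⟩
    change betaNumber aj lam b + 1 = betaNumber aj lam b' at hb'
    have hlt : b' < b := (betaNumber_strictAnti aj lam).lt_iff_gt.mp (by omega)
    have hle := (betaNumber_strictAnti aj lam).antitone (Nat.le_sub_one_of_lt hlt)
    have hpart := lam.antitone (b.sub_le 1)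
    simp only [betaNumber] at *
    omega
  · rintro ⟨hb, hpart⟩
    refine ⟨b - 1, ?_⟩
    simp only [betaNumber, hpart]
    omega

theorem removable_iff :
    lam.Removable b c ↔
      chargedContent aj (b, c) = betaNumber aj lam b ∧
        betaNumber aj lam b - 1 ∉ betaSet aj lam := by
  have hpart : lam.part (b + 1) ≤ lam.part b := lam.antitone b.le_succ
  rw [betaNumber_sub_one_mem_iff]
  simp only [PartitionFun.Removable, chargedContent, betaNumber] at *
  omega

theorem addable_iff :
    lam.Addable b c ↔
      chargedContent aj (b, c) = betaNumber aj lam b + 1 ∧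
        betaNumber aj lam b + 1 ∉ betaSet aj lam := by
  have hpart := lam.antitone (b.sub_le 1)
  rw [betaNumber_add_one_mem_iff]
  simp only [PartitionFun.Addable, chargedContent, betaNumber] at *
  omega

theorem eq_of_chargedContent_eq_of_betaNumber_eq {p q : ℕ × ℕ}
    (hcontent : chargedContent aj p = chargedContent aj q)
    (hbeta : betaNumber aj lam p.1 = betaNumber aj lam q.1) : p = q := by
  have hrow := (betaNumber_strictAnti aj lam).injective hbeta
  simp only [chargedContent] at hcontent
  exact Prod.ext hrow (by omega)

variable (aj lam)

theorem bijOn_chargedContent_removable :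
    Set.BijOn (chargedContent aj) {p | lam.Removable p.1 p.2}
      {y | y ∈ betaSet aj lam ∧ y - 1 ∉ betaSet aj lam} := by
  refine ⟨fun p hp => ?_, fun p hp q hq hpq => ?_, ?_⟩
  · obtain ⟨hcontent, hleft⟩ := removable_iff.mp hp
    exact hcontent ▸ ⟨betaNumber_mem_betaSet aj lam p.1, hleft⟩
  · have hp' := (removable_iff (aj := aj).mp hp).1
    have hq' := (removable_iff (aj := aj).mp hq).1
    exact eq_of_chargedContent_eq_of_betaNumber_eq hpq (by rw [← hp', ← hq', hpq])
  · rintro _ ⟨⟨b, rfl⟩, hleft⟩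
    have hpart : lam.part b ≠ 0 := by
      have hne := mt betaNumber_sub_one_mem_iff.mpr hleft
      have hle : lam.part (b + 1) ≤ lam.part b := lam.antitone b.le_succ
      omega
    have hcontent : chargedContent aj (b, lam.part b - 1) = betaNumber aj lam b := by
      simp only [chargedContent, betaNumber]
      omega
    exact ⟨(b, lam.part b - 1), removable_iff.mpr ⟨hcontent, hleft⟩, hcontent⟩

theorem bijOn_chargedContent_addable :
    Set.BijOn (chargedContent aj) {p | lam.Addable p.1 p.2}
      {y | y - 1 ∈ betaSet aj lam ∧ y ∉ betaSet aj lam} := by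
  refine ⟨fun p hp => ?_, fun p hp q hq hpq => ?_, ?_⟩
  · obtain ⟨hcontent, hright⟩ := addable_iff.mp hp
    refine hcontent ▸ ⟨?_, hright⟩
    simpa only [add_sub_cancel_right] using betaNumber_mem_betaSet aj lam p.1
  · have hp' := (addable_iff (aj := aj).mp hp).1
    have hq' := (addable_iff (aj := aj).mp hq).1
    exact eq_of_chargedContent_eq_of_betaNumber_eq hpq (by linarith)
  · rintro y ⟨⟨b, hb⟩, hright⟩
    have hy : y = betaNumber aj lam b + 1 := sub_eq_iff_eq_add.mp hb
    have hcontent : chargedContent aj (b, lam.part b) = betaNumber aj lam b + 1 := by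
      simp only [chargedContent, betaNumber]
      ring
    exact ⟨(b, lam.part b), addable_iff.mpr ⟨hcontent, hy ▸ hright⟩, hcontent.trans hy.symm⟩

end BetaSet

section Counting

theorem ncard_emod_eq_of_bijOn {α : Type*} {f : α → ℤ} {s : Set α} {S : Set ℤ}
    (hf : Set.BijOn f s S) {n : ℤ} (hn : n ≠ 0) (i : ℤ) :
    {p | p ∈ s ∧ f p % n = i % n}.ncard = {t : ℤ | i + t * n ∈ S}.ncard := by
  have himage : f '' {p | p ∈ s ∧ f p % n = i % n} =
      (fun t => i + t * n) '' {t | i + t * n ∈ S} := by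
    ext y
    constructor
    · rintro ⟨p, ⟨hp, hres⟩, rfl⟩
      obtain ⟨t, ht⟩ := Int.ModEq.dvd (Int.ModEq.symm hres)
      have hy : i + t * n = f p := by linarith
      exact ⟨t, by simpa only [Set.mem_ofPred_eq, hy] using hf.mapsTo hp, hy⟩
    · rintro ⟨t, ht, rfl⟩
      obtain ⟨p, hp, hfp⟩ := hf.surjOn ht
      exact ⟨p, ⟨hp, by rw [hfp, Int.add_mul_emod_self_right]⟩, hfp⟩
  have hinj : Function.Injective fun t => i + t * n :=
    (add_right_injective i).comp (mul_left_injective₀ hn)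
  rw [← (hf.injOn.mono fun _ hp => hp.1).ncard_image, himage,
    Set.ncard_image_of_injective _ hinj]

theorem ncard_Ioc_sub_ncard_Ioc (s u : ℤ) :
    ((Set.Ioc u s).ncard : ℤ) - (Set.Ioc s u).ncard = s - u := by
  rw [← Finset.coe_Ioc, ← Finset.coe_Ioc, Set.ncard_coe_finset, Set.ncard_coe_finset,
    Int.card_Ioc, Int.card_Ioc]
  omega

end Counting

section Level

/-- The runner of the `e`-runner abacus containing the position `i`. -/
def runner (e : ℕ) (i : ℤ) : ℕ := (i % (e : ℤ)).toNat

/-- The level of the lowest bead on the runner containing `i`, measured from the position `i`: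
the largest `t` with `i + t * e` in the β-set. -/
noncomputable def levelFrom (e : ℕ) (aj : ℤ) (lam : PartitionFun) (i : ℤ) : ℤ :=
  level e aj lam (runner e i) - i / (e : ℤ)

variable {e : ℕ} {aj : ℤ} {lam : PartitionFun}

theorem runner_lt (he : 0 < e) (i : ℤ) : runner e i < e := by
  have := Int.emod_lt_of_pos i (Int.natCast_pos.mpr he)
  unfold runner
  omega

theorem ediv_mul_add_runner (he : 0 < e) (i : ℤ) : i / (e : ℤ) * e + runner e i = i := by
  rw [runner, Int.toNat_of_nonneg (Int.emod_nonneg i (by omega)), Int.ediv_mul_add_emod]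

theorem IsECore.sub_mul_mem (hcore : IsECore e aj lam) {y : ℤ} (hy : y ∈ betaSet aj lam)
    (n : ℕ) : y - n * e ∈ betaSet aj lam := by
  induction n with
  | zero => simpa using hy
  | succ n ih =>
    have hstep := hcore _ ih
    rwa [sub_sub, ← add_one_mul, ← Nat.cast_succ] at hstep

theorem isGreatest_level (he : 0 < e) (aj : ℤ) (lam : PartitionFun) (i : ℕ) :
    IsGreatest {x : ℤ | x * (e : ℤ) + (i : ℤ) ∈ betaSet aj lam} (level e aj lam i) := by
  have he' : (0 : ℤ) < e := Int.natCast_pos.mpr he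
  have hbdd : BddAbove {x : ℤ | x * (e : ℤ) + (i : ℤ) ∈ betaSet aj lam} := by
    obtain ⟨M, hM⟩ := bddAbove_betaSet aj lam
    exact ⟨(M - i) / e, fun x hx => Int.le_ediv_of_mul_le he' (le_sub_iff_add_le.mpr (hM hx))⟩
  have hne : {x : ℤ | x * (e : ℤ) + (i : ℤ) ∈ betaSet aj lam}.Nonempty := by
    obtain ⟨N, hN⟩ := exists_Iic_subset_betaSet aj lam
    exact ⟨(N - i) / e, hN (le_sub_iff_add_le.mp (Int.ediv_mul_le _ he'.ne'))⟩
  exact ⟨Int.csSup_mem hne hbdd, fun _ hx => le_csSup hbdd hx⟩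

theorem IsECore.mem_betaSet_iff_le_level (hcore : IsECore e aj lam) (he : 0 < e) (i : ℕ)
    (x : ℤ) : x * e + i ∈ betaSet aj lam ↔ x ≤ level e aj lam i := by
  refine ⟨fun hx => (isGreatest_level he aj lam i).2 hx, fun hx => ?_⟩
  obtain ⟨n, hn⟩ := Int.le.dest hx
  have hmem := hcore.sub_mul_mem (isGreatest_level he aj lam i).1 n
  rw [← hn] at hmem
  convert hmem using 1
  ring

theorem IsECore.mem_betaSet_iff_le_levelFrom (hcore : IsECore e aj lam) (he : 0 < e) (i t : ℤ) :
    i + t * e ∈ betaSet aj lam ↔ t ≤ levelFrom e aj lam i := by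
  rw [levelFrom, le_sub_iff_add_le, ← hcore.mem_betaSet_iff_le_level he, add_mul, add_assoc,
    ediv_mul_add_runner he, add_comm]

end Level

section Delta

variable {e r : ℕ} {a : Fin r → ℤ} {m mu : Multipartition r}

theorem removableCount_eq_ncard (he : 0 < e) (a : Fin r → ℤ) (m : Multipartition r) (i : ℤ)
    (j : Fin r) :
    removableCount e a m i j =
      {t : ℤ | i + t * e ∈ betaSet (a j) (m j) ∧ i + t * e - 1 ∉ betaSet (a j) (m j)}.ncard :=
  ncard_emod_eq_of_bijOn (bijOn_chargedContent_removable (a j) (m j)) (by omega) i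

theorem addableCount_eq_ncard (he : 0 < e) (a : Fin r → ℤ) (m : Multipartition r) (i : ℤ)
    (j : Fin r) :
    addableCount e a m i j =
      {t : ℤ | i + t * e - 1 ∈ betaSet (a j) (m j) ∧ i + t * e ∉ betaSet (a j) (m j)}.ncard :=
  ncard_emod_eq_of_bijOn (bijOn_chargedContent_addable (a j) (m j)) (by omega) i

theorem delta_eq_levelFrom_sub_levelFrom (he : 0 < e) (i : ℤ) {j : Fin r}
    (hcore : IsECore e (a j) (m j)) :
    delta e a m i j = levelFrom e (a j) (m j) i - levelFrom e (a j) (m j) (i - 1) := by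
  rw [delta, removableCount_eq_ncard he, addableCount_eq_ncard he,
    ← ncard_Ioc_sub_ncard_Ioc (levelFrom e (a j) (m j) i)]
  simp only [add_sub_right_comm i _ 1, hcore.mem_betaSet_iff_le_levelFrom he, not_le, Set.Ioc,
    and_comm]

theorem delta_sub_delta_eq_gammaD (he : 0 < e) (hcore : IsMulticore e a m) (i : ℤ)
    (j k : Fin r) :
    delta e a m i j - delta e a m i k =
      gammaD e a m (runner e i) (runner e (i - 1)) j k := by
  rw [delta_eq_levelFrom_sub_levelFrom he i (hcore j),
    delta_eq_levelFrom_sub_levelFrom he i (hcore k)]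
  simp only [levelFrom, gammaD, gamma]
  ring

theorem dmin_le_delta (e : ℕ) (a : Fin r → ℤ) (m : Multipartition r) (i : ℤ) (j : Fin r) :
    dmin e a m i ≤ delta e a m i j :=
  ciInf_le (Set.finite_range (delta e a m i)).bddBelow j

theorem exists_delta_eq_dmin (hr : 0 < r) (e : ℕ) (a : Fin r → ℤ) (m : Multipartition r)
    (i : ℤ) : ∃ j, delta e a m i j = dmin e a m i :=
  haveI : Nonempty (Fin r) := ⟨⟨0, hr⟩⟩
  exists_eq_ciInf_of_finite

theorem dmin_lt_dmin_add_of_hub_eq (hr : 0 < r) {i g : ℤ} (hg : 0 < g)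
    (hspread : ∀ j k, delta e a m i j - delta e a m i k ≤ g)
    (hhub : hub e a m i = hub e a mu i) : dmin e a mu i < dmin e a m i + g := by
  by_contra! hle
  obtain ⟨k, hk⟩ := exists_delta_eq_dmin hr e a m i
  have hmu := dmin_le_delta e a mu i
  have hsum : hub e a m i < hub e a mu i := by
    refine Finset.sum_lt_sum (fun j _ => ?_) ⟨k, Finset.mem_univ k, ?_⟩
    · linarith [hspread j k, hmu j]
    · linarith [hmu k]
  exact hsum.ne hhub

end Delta

theorem stmt_4_general {e r : ℕ} (he : 0 < e) (hr : 0 < r) (a : Fin r → ℤ)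
    (m : Multipartition r) (hcore : IsMulticore e a m) (mu : Multipartition r)
    {i g : ℤ} (hg : 0 < g)
    (hgamma : ∀ j k : Fin r, gammaD e a m (runner e i) (runner e (i - 1)) j k ≤ g)
    (hhub : hub e a m i = hub e a mu i) :
    dmin e a mu i < dmin e a m i + g :=
  dmin_lt_dmin_add_of_hub_eq hr hg
    (fun j k => (delta_sub_delta_eq_gammaD he hcore i j k).trans_le (hgamma j k)) hhub

/-- Lemma 4.5: let `m` be a multicore with `|γ^{jk}_{il}(m)| ≤ 2`
for all `i,l,j,k`, and let `μ` be a multicore in the core block of `m`.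
If `d_ī(m) = d − 1` and `d_ī(μ) = d' − 1`, then `d' ≤ d + 1`. -/
theorem stmt_4 {e r : ℕ} (he : 2 ≤ e) (hr : 0 < r) (a : Fin r → ℤ)
    (m : Multipartition r) (hcore : IsMulticore e a m)
    (hg : ∀ i < e, ∀ l < e, ∀ j k : Fin r, |gammaD e a m i l j k| ≤ 2)
    (mu : Multipartition r) (hmucore : IsMulticore e a mu)
    (hsame : SameHub e a m mu) (hmin : MinimalWeight e a mu)
    (ibar : ℤ) (d d' : ℤ) (hd : dmin e a m ibar = d - 1)
    (hd' : dmin e a mu ibar = d' - 1) :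
    d' ≤ d + 1 := by
  have he' : 0 < e := by omega
  have hlt := stmt_4_general he' hr a m hcore mu two_pos
    (fun j k => (abs_le.mp (hg _ (runner_lt he' ibar) _ (runner_lt he' (ibar - 1)) j k)).2)
    (hsame ibar)
  omega

end AK
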